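/- arXiv:2008.13179 — 2 statements merged into one kernel-verified Lean document; each statement's English description precedes it below -/
import Mathlib

section
/- (Product estimate in the weighted spaces.) Let m, n ∈ {3,4,5} and α ∈ (0,1). There is a constant C, depending only on m, n, α, Ξ₀ and the cutoff χ, such that: if Q₁ ∈ 𝔠⁰_{(m)} and Q₂ ∈ 𝔠⁰_{(n)}, then Q₁·Q₂ ∈ 𝔠⁰_{(n)} and ‖Q₁·Q₂;𝔠⁰_{(n)}‖ ≤ C·‖Q₁;𝔠⁰_{(m)}‖·‖Q₂;𝔠⁰_{(n)}‖; and if Q₁ ∈ 𝔠^{0,α}_{(m)} and Q₂ ∈ 𝔠^{0,α}_{(n)}, then Q₁·Q₂ ∈ 𝔠^{0,α}_{(n)} and ‖Q₁·Q₂;𝔠^{0,α}_{(n)}‖ ≤ C·‖Q₁;𝔠^{0,α}_{(m)}‖·‖Q₂;𝔠^{0,α}_{(n)}‖. -/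
open Real Metric ENNReal

noncomputable section

/-- Partial derivative in the first coordinate `ϖ`. -/
def d1 (f : ℝ × ℝ → ℝ) : ℝ × ℝ → ℝ := fun p => fderiv ℝ f p (1, 0)

/-- Partial derivative in the second coordinate `z`. -/
def d3 (f : ℝ × ℝ → ℝ) : ℝ × ℝ → ℝ := fun p => fderiv ℝ f p (0, 1)

/-- `r = √(ϖ² + z²)`. -/
def rr (p : ℝ × ℝ) : ℝ := Real.sqrt (p.1 ^ 2 + p.2 ^ 2)

/-- The near part `Q^{[0]} = χ(r/R₀)·Q`. -/
def cut0 (χ : ℝ → ℝ) (R₀ : ℝ) (Q : ℝ × ℝ → ℝ) : ℝ × ℝ → ℝ :=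
  fun p => χ (rr p / R₀) * Q p

/-- The far part `Q^{[∞]} = (1 − χ(r/R₀))·Q`. -/
def cutInf (χ : ℝ → ℝ) (R₀ : ℝ) (Q : ℝ × ℝ → ℝ) : ℝ × ℝ → ℝ :=
  fun p => (1 - χ (rr p / R₀)) * Q p

/-- The lift `Q^{♭(n)}(ξ) = Q(a·√(ξ₁²+⋯+ξ_{n−1}²), a·ξₙ)`. -/
def flat (n : ℕ) (a : ℝ) (Q : ℝ × ℝ → ℝ) (ξ : EuclideanSpace ℝ (Fin n)) : ℝ :=
  Q (a * Real.sqrt (∑ i : Fin n, if (i : ℕ) < n - 1 then (ξ i) ^ 2 else 0),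
     a * ∑ i : Fin n, if (i : ℕ) = n - 1 then ξ i else 0)

/-- The Kelvin inversion of coordinates (parameter `Ξ₀`). -/
def kelvinPt (n : ℕ) (Ξ₀ : ℝ) (ξ : EuclideanSpace ℝ (Fin n)) : EuclideanSpace ℝ (Fin n) :=
  ((Ξ₀ / ‖ξ‖) ^ 2 : ℝ) • ξ

/-- The Kelvin transform of a function. -/
def kelvin (n : ℕ) (Ξ₀ : ℝ) (g : EuclideanSpace ℝ (Fin n) → ℝ)
    (ξs : EuclideanSpace ℝ (Fin n)) : ℝ :=
  (Ξ₀ / ‖ξs‖) ^ (n - 2) * g (kelvinPt n Ξ₀ ξs)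

/-- The closed ball of radius `Ξ` in `ℝⁿ`. -/
def cb (n : ℕ) (Ξ : ℝ) : Set (EuclideanSpace ℝ (Fin n)) :=
  Metric.closedBall (0 : EuclideanSpace ℝ (Fin n)) Ξ

/-- `⨆`-style `C^l` norm (values in `ℝ≥0∞`). -/
def cNormE (n l : ℕ) (f : EuclideanSpace ℝ (Fin n) → ℝ) (s : Set (EuclideanSpace ℝ (Fin n))) :
    ℝ≥0∞ :=
  ⨆ i ∈ Finset.range (l + 1), ⨆ x ∈ s,
    (‖iteratedFDerivWithin ℝ i f s x‖₊ : ℝ≥0∞)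

/-- Hölder seminorm of the `l`-th derivative (values in `ℝ≥0∞`). -/
def holderSemiE (n l : ℕ) (α : ℝ) (f : EuclideanSpace ℝ (Fin n) → ℝ)
    (s : Set (EuclideanSpace ℝ (Fin n))) : ℝ≥0∞ :=
  ⨆ x ∈ s, ⨆ y ∈ s, ⨆ (_ : x ≠ y ∧ dist x y ≤ 1),
    (‖iteratedFDerivWithin ℝ l f s x - iteratedFDerivWithin ℝ l f s y‖₊ : ℝ≥0∞) /
      ENNReal.ofReal (dist x y ^ α)

/-- The `C^{l,α}` norm (values in `ℝ≥0∞`). -/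
def hNormE (n l : ℕ) (α : ℝ) (f : EuclideanSpace ℝ (Fin n) → ℝ)
    (s : Set (EuclideanSpace ℝ (Fin n))) : ℝ≥0∞ :=
  cNormE n l f s + holderSemiE n l α f s

/-- Membership of an extension in `C^l` on a set. -/
def MemC (n l : ℕ) (f : EuclideanSpace ℝ (Fin n) → ℝ) (s : Set (EuclideanSpace ℝ (Fin n))) :
    Prop :=
  ContDiffOn ℝ l f s

/-- Membership of an extension in `C^{l,α}` on a set. -/
def MemCHolder (n l : ℕ) (α : ℝ) (f : EuclideanSpace ℝ (Fin n) → ℝ)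
    (s : Set (EuclideanSpace ℝ (Fin n))) : Prop :=
  ContDiffOn ℝ l f s ∧ holderSemiE n l α f s < ⊤

/-- Membership of `Q` in the weighted space `𝔠^l_{(n)}` (symmetry in `z` not included). -/
def MemChunk (n l : ℕ) (a Ξ₀ : ℝ) (χ : ℝ → ℝ) (Q : ℝ × ℝ → ℝ) : Prop :=
  MemC n l (flat n a (cut0 χ (a * Ξ₀) Q)) (cb n (2 * Ξ₀)) ∧
  ∃ h : EuclideanSpace ℝ (Fin n) → ℝ, MemC n l h (cb n Ξ₀) ∧
    Set.EqOn h (kelvin n Ξ₀ (flat n a (cutInf χ (a * Ξ₀) Q))) (cb n Ξ₀ \ {0})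

/-- The norm `‖Q; 𝔠^l_{(n)}‖` (values in `ℝ≥0∞`). -/
def chunkNormE (n l : ℕ) (a Ξ₀ : ℝ) (χ : ℝ → ℝ) (Q : ℝ × ℝ → ℝ) : ℝ≥0∞ :=
  max (cNormE n l (flat n a (cut0 χ (a * Ξ₀) Q)) (cb n (2 * Ξ₀)))
    (⨅ (h : EuclideanSpace ℝ (Fin n) → ℝ)
       (_ : MemC n l h (cb n Ξ₀) ∧
         Set.EqOn h (kelvin n Ξ₀ (flat n a (cutInf χ (a * Ξ₀) Q))) (cb n Ξ₀ \ {0})),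
      cNormE n l h (cb n Ξ₀))

/-- Membership of `Q` in the weighted space `𝔠^{l,α}_{(n)}` (symmetry in `z` not included). -/
def MemChunkH (n l : ℕ) (α : ℝ) (a Ξ₀ : ℝ) (χ : ℝ → ℝ) (Q : ℝ × ℝ → ℝ) : Prop :=
  MemCHolder n l α (flat n a (cut0 χ (a * Ξ₀) Q)) (cb n (2 * Ξ₀)) ∧
  ∃ h : EuclideanSpace ℝ (Fin n) → ℝ, MemCHolder n l α h (cb n Ξ₀) ∧
    Set.EqOn h (kelvin n Ξ₀ (flat n a (cutInf χ (a * Ξ₀) Q))) (cb n Ξ₀ \ {0})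

/-- The norm `‖Q; 𝔠^{l,α}_{(n)}‖` (values in `ℝ≥0∞`). -/
def chunkNormHE (n l : ℕ) (α : ℝ) (a Ξ₀ : ℝ) (χ : ℝ → ℝ) (Q : ℝ × ℝ → ℝ) : ℝ≥0∞ :=
  max (hNormE n l α (flat n a (cut0 χ (a * Ξ₀) Q)) (cb n (2 * Ξ₀)))
    (⨅ (h : EuclideanSpace ℝ (Fin n) → ℝ)
       (_ : MemCHolder n l α h (cb n Ξ₀) ∧
         Set.EqOn h (kelvin n Ξ₀ (flat n a (cutInf χ (a * Ξ₀) Q))) (cb n Ξ₀ \ {0})),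
      hNormE n l α h (cb n Ξ₀))

/-! ### Auxiliary material for the proof -/

def hA (n : ℕ) (ξ : EuclideanSpace ℝ (Fin n)) : ℝ :=
  Real.sqrt (∑ i : Fin n, if (i : ℕ) < n - 1 then (ξ i) ^ 2 else 0)

def hB (n : ℕ) (ξ : EuclideanSpace ℝ (Fin n)) : ℝ :=
  ∑ i : Fin n, if (i : ℕ) = n - 1 then ξ i else 0

lemma flat_eq (n : ℕ) (a : ℝ) (Q : ℝ × ℝ → ℝ) (ξ : EuclideanSpace ℝ (Fin n)) :
    flat n a Q ξ = Q (a * hA n ξ, a * hB n ξ) := rfl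

lemma hA_sq_add_hB_sq (n : ℕ) (hn : n = 3 ∨ n = 4 ∨ n = 5) (ξ : EuclideanSpace ℝ (Fin n)) :
    hA n ξ ^ 2 + hB n ξ ^ 2 = ‖ξ‖ ^ 2 := by
  rw [EuclideanSpace.real_norm_sq_eq]
  unfold hA hB
  rw [Real.sq_sqrt (Finset.sum_nonneg (fun i _ => by split_ifs <;> positivity))]
  rcases hn with rfl | rfl | rfl <;> simp [Fin.sum_univ_succ] <;> ring

lemma hA_nonneg (n : ℕ) (ξ : EuclideanSpace ℝ (Fin n)) : 0 ≤ hA n ξ := Real.sqrt_nonneg _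

def hD (n : ℕ) (ξ : EuclideanSpace ℝ (Fin n)) : EuclideanSpace ℝ (Fin n) :=
  WithLp.toLp 2 (fun i : Fin n => if (i : ℕ) < n - 1 then ξ i else 0)

lemma hA_eq_norm (n : ℕ) (ξ : EuclideanSpace ℝ (Fin n)) : hA n ξ = ‖hD n ξ‖ := by
  rw [EuclideanSpace.norm_eq]
  unfold hA hD
  congr 1
  refine Finset.sum_congr rfl (fun i _ => ?_)
  by_cases h : (i : ℕ) < n - 1 <;> simp [h]

lemma hD_sub (n : ℕ) (ξ η : EuclideanSpace ℝ (Fin n)) : hD n (ξ - η) = hD n ξ - hD n η := by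
  ext i
  by_cases h : (i : ℕ) < n - 1 <;> simp [hD, h]

lemma hD_smul (n : ℕ) (c : ℝ) (ξ : EuclideanSpace ℝ (Fin n)) : hD n (c • ξ) = c • hD n ξ := by
  ext i
  by_cases h : (i : ℕ) < n - 1 <;> simp [hD, h]

lemma hB_sub (n : ℕ) (ξ η : EuclideanSpace ℝ (Fin n)) : hB n (ξ - η) = hB n ξ - hB n η := by
  unfold hB
  rw [← Finset.sum_sub_distrib]
  refine Finset.sum_congr rfl (fun i _ => ?_)
  by_cases h : (i : ℕ) = n - 1 <;> simp [h]

lemma hB_smul (n : ℕ) (c : ℝ) (ξ : EuclideanSpace ℝ (Fin n)) : hB n (c • ξ) = c * hB n ξ := by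
  unfold hB
  rw [Finset.mul_sum]
  refine Finset.sum_congr rfl (fun i _ => ?_)
  by_cases h : (i : ℕ) = n - 1 <;> simp [h]

lemma hA_smul (n : ℕ) (c : ℝ) (hc : 0 ≤ c) (ξ : EuclideanSpace ℝ (Fin n)) :
    hA n (c • ξ) = c * hA n ξ := by
  rw [hA_eq_norm, hA_eq_norm, hD_smul, norm_smul, Real.norm_of_nonneg hc]

/-- Section of `(hA, hB)`. -/
def hS (m : ℕ) (u v : ℝ) : EuclideanSpace ℝ (Fin m) :=
  WithLp.toLp 2 (fun i : Fin m => if (i : ℕ) = 0 then u else if (i : ℕ) = m - 1 then v else 0)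

lemma hA_hS (m : ℕ) (hm : m = 3 ∨ m = 4 ∨ m = 5) (u v : ℝ) (hu : 0 ≤ u) :
    hA m (hS m u v) = u := by
  unfold hA hS
  rcases hm with rfl | rfl | rfl <;> simp [Fin.sum_univ_succ, Real.sqrt_sq hu]

lemma hB_hS (m : ℕ) (hm : m = 3 ∨ m = 4 ∨ m = 5) (u v : ℝ) :
    hB m (hS m u v) = v := by
  unfold hB hS
  rcases hm with rfl | rfl | rfl <;> simp [Fin.sum_univ_succ]

lemma hS_dist (m : ℕ) (hm : m = 3 ∨ m = 4 ∨ m = 5) (u v u' v' : ℝ) :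
    dist (hS m u v) (hS m u' v') ^ 2 = (u - u') ^ 2 + (v - v') ^ 2 := by
  rw [dist_eq_norm, EuclideanSpace.real_norm_sq_eq]
  unfold hS
  rcases hm with rfl | rfl | rfl <;> simp [Fin.sum_univ_succ]

def hT (n m : ℕ) (ξ : EuclideanSpace ℝ (Fin n)) : EuclideanSpace ℝ (Fin m) :=
  hS m (hA n ξ) (hB n ξ)

lemma flat_hT (n m : ℕ) (hm : m = 3 ∨ m = 4 ∨ m = 5) (a : ℝ) (Q : ℝ × ℝ → ℝ)
    (ξ : EuclideanSpace ℝ (Fin n)) : flat m a Q (hT n m ξ) = flat n a Q ξ := by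
  rw [flat_eq, flat_eq, hT, hA_hS m hm _ _ (hA_nonneg n ξ), hB_hS m hm]

lemma norm_hT (n m : ℕ) (hn : n = 3 ∨ n = 4 ∨ n = 5) (hm : m = 3 ∨ m = 4 ∨ m = 5)
    (ξ : EuclideanSpace ℝ (Fin n)) : ‖hT n m ξ‖ = ‖ξ‖ := by
  have h : ‖hT n m ξ‖ ^ 2 = ‖ξ‖ ^ 2 := by
    rw [← hA_sq_add_hB_sq n hn, ← hA_sq_add_hB_sq m hm, hT, hA_hS m hm _ _ (hA_nonneg n ξ),
      hB_hS m hm]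
  exact (sq_eq_sq₀ (norm_nonneg _) (norm_nonneg _)).1 h

lemma dist_hT (n m : ℕ) (hn : n = 3 ∨ n = 4 ∨ n = 5) (hm : m = 3 ∨ m = 4 ∨ m = 5)
    (ξ η : EuclideanSpace ℝ (Fin n)) : dist (hT n m ξ) (hT n m η) ≤ dist ξ η := by
  refine abs_le_of_sq_le_sq' ?_ dist_nonneg |>.2
  rw [hT, hT, hS_dist m hm, dist_eq_norm, ← hA_sq_add_hB_sq n hn, ← hB_sub]
  have h : |hA n ξ - hA n η| ≤ hA n (ξ - η) := by
    rw [hA_eq_norm, hA_eq_norm, hA_eq_norm, hD_sub]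
    exact abs_norm_sub_norm_le _ _
  have := sq_le_sq' (by linarith [abs_le.1 h |>.1]) (abs_le.1 h).2
  linarith

lemma hT_kelvinPt (n m : ℕ) (hn : n = 3 ∨ n = 4 ∨ n = 5) (hm : m = 3 ∨ m = 4 ∨ m = 5)
    (Ξ₀ : ℝ) (ξ : EuclideanSpace ℝ (Fin n)) (a : ℝ) (Q : ℝ × ℝ → ℝ) :
    flat m a Q (kelvinPt m Ξ₀ (hT n m ξ)) = flat n a Q (kelvinPt n Ξ₀ ξ) := by
  unfold kelvinPt
  rw [norm_hT n m hn hm, flat_eq, flat_eq, hA_smul _ _ (sq_nonneg _), hA_smul _ _ (sq_nonneg _),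
    hB_smul, hB_smul, hT, hA_hS m hm _ _ (hA_nonneg n ξ), hB_hS m hm]

lemma rr_flat (n : ℕ) (hn : n = 3 ∨ n = 4 ∨ n = 5) (a : ℝ) (ha : 0 < a)
    (ξ : EuclideanSpace ℝ (Fin n)) : rr (a * hA n ξ, a * hB n ξ) = a * ‖ξ‖ := by
  unfold rr
  rw [← Real.sqrt_sq (by positivity : 0 ≤ a * ‖ξ‖), mul_pow a ‖ξ‖, ← hA_sq_add_hB_sq n hn]
  congr 1
  simp only
  ring

lemma flat_cut0 (n : ℕ) (hn : n = 3 ∨ n = 4 ∨ n = 5) (a : ℝ) (ha : 0 < a) (Ξ₀ : ℝ) (χ : ℝ → ℝ)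
    (Q : ℝ × ℝ → ℝ) (ξ : EuclideanSpace ℝ (Fin n)) :
    flat n a (cut0 χ (a * Ξ₀) Q) ξ = χ (‖ξ‖ / Ξ₀) * flat n a Q ξ := by
  rw [flat_eq, flat_eq, cut0, rr_flat n hn a ha, mul_div_mul_left _ _ ha.ne']

lemma flat_cutInf (n : ℕ) (hn : n = 3 ∨ n = 4 ∨ n = 5) (a : ℝ) (ha : 0 < a) (Ξ₀ : ℝ) (χ : ℝ → ℝ)
    (Q : ℝ × ℝ → ℝ) (ξ : EuclideanSpace ℝ (Fin n)) :
    flat n a (cutInf χ (a * Ξ₀) Q) ξ = (1 - χ (‖ξ‖ / Ξ₀)) * flat n a Q ξ := by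
  rw [flat_eq, flat_eq, cutInf, rr_flat n hn a ha, mul_div_mul_left _ _ ha.ne']

/-! Quantitative Hölder predicate -/

structure Good {X : Type*} [PseudoMetricSpace X] (α : ℝ) (f : X → ℝ) (s : Set X) (M : ℝ) :
    Prop where
  cont : ContinuousOn f s
  bd : ∀ x ∈ s, |f x| ≤ M
  hol : ∀ x ∈ s, ∀ y ∈ s, |f x - f y| ≤ M * dist x y ^ α

section GoodLemmas
variable {X Y : Type*} [PseudoMetricSpace X] [PseudoMetricSpace Y]

lemma Good.congr {α : ℝ} {f g : X → ℝ} {s : Set X} {M : ℝ} (h : Good α f s M)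
    (hfg : Set.EqOn g f s) : Good α g s M where
  cont := h.cont.congr hfg
  bd x hx := by rw [hfg hx]; exact h.bd x hx
  hol x hx y hy := by rw [hfg hx, hfg hy]; exact h.hol x hx y hy

lemma Good.mono {α : ℝ} {f : X → ℝ} {s : Set X} {M N : ℝ} (h : Good α f s M)
    (hMN : M ≤ N) : Good α f s N where
  cont := h.cont
  bd x hx := (h.bd x hx).trans hMN
  hol x hx y hy := (h.hol x hx y hy).trans
    (mul_le_mul_of_nonneg_right hMN (Real.rpow_nonneg dist_nonneg _))

lemma Good.add {α : ℝ} {f g : X → ℝ} {s : Set X} {M N : ℝ} (hf : Good α f s M)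
    (hg : Good α g s N) : Good α (fun x => f x + g x) s (M + N) where
  cont := hf.cont.add hg.cont
  bd x hx := (abs_add_le _ _).trans (add_le_add (hf.bd x hx) (hg.bd x hx))
  hol x hx y hy := by
    have : f x + g x - (f y + g y) = (f x - f y) + (g x - g y) := by ring
    rw [this, add_mul]
    exact (abs_add_le _ _).trans (add_le_add (hf.hol x hx y hy) (hg.hol x hx y hy))

lemma Good.mul {α : ℝ} {f g : X → ℝ} {s : Set X} {M N : ℝ} (hf : Good α f s M)
    (hg : Good α g s N) : Good α (fun x => f x * g x) s (2 * M * N) where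
  cont := hf.cont.mul hg.cont
  bd x hx := by
    have h1 := hf.bd x hx
    have h2 := hg.bd x hx
    have h3 := abs_nonneg (f x)
    have h4 := abs_nonneg (g x)
    rw [abs_mul]
    have := mul_le_mul h1 h2 h4 (h3.trans h1)
    have := mul_nonneg (h3.trans h1) (h4.trans h2)
    linarith
  hol x hx y hy := by
    have : f x * g x - f y * g y = f x * (g x - g y) + (f x - f y) * g y := by ring
    rw [this]
    refine (abs_add_le _ _).trans ?_
    rw [abs_mul, abs_mul]
    have h1 := hf.bd x hx
    have h2 := hg.bd y hy
    have h3 := abs_nonneg (f x)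
    have h4 := abs_nonneg (g y)
    have h5 := mul_le_mul h1 (hg.hol x hx y hy) (abs_nonneg _) (h3.trans h1)
    have h6 := mul_le_mul (hf.hol x hx y hy) h2 h4 ((abs_nonneg _).trans (hf.hol x hx y hy))
    calc _ ≤ _ := add_le_add h5 h6
      _ = _ := by ring

lemma Good.comp {α : ℝ} (hα0 : 0 ≤ α) (hα1 : α ≤ 1) {f : Y → ℝ} {t : Set Y} {M : ℝ}
    (hf : Good α f t M) {T : X → Y} {s : Set X} (hT : Set.MapsTo T s t) {L : ℝ} (hL : 1 ≤ L)
    (hLip : ∀ x ∈ s, ∀ y ∈ s, dist (T x) (T y) ≤ L * dist x y) :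
    Good α (fun x => f (T x)) s (L * M) where
  cont := by
    refine hf.cont.comp ?_ hT
    exact (LipschitzOnWith.of_dist_le_mul (K := ⟨L, by linarith⟩) hLip).continuousOn
  bd x hx := by
    have h := hf.bd _ (hT hx)
    have := (abs_nonneg _).trans h
    nlinarith
  hol x hx y hy := by
    have h := hf.hol _ (hT hx) _ (hT hy)
    have hM := (abs_nonneg _).trans (hf.bd _ (hT hx))
    refine h.trans ?_
    have h1 : dist (T x) (T y) ^ α ≤ (L * dist x y) ^ α :=
      Real.rpow_le_rpow dist_nonneg (hLip x hx y hy) hα0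
    rw [Real.mul_rpow (by linarith) dist_nonneg] at h1
    have h2 : L ^ α ≤ L := by
      simpa using Real.rpow_le_rpow_of_exponent_le hL hα1
    have h3 : 0 ≤ dist x y ^ α := Real.rpow_nonneg dist_nonneg _
    calc M * dist (T x) (T y) ^ α ≤ M * (L ^ α * dist x y ^ α) := by gcongr
      _ ≤ M * (L * dist x y ^ α) := by gcongr
      _ = _ := by ring

lemma Good.of_lip {α : ℝ} (hα0 : 0 ≤ α) (hα1 : α ≤ 1) {f : X → ℝ} {s : Set X} {L : ℝ}
    (hL : 0 ≤ L) (hb : ∀ x ∈ s, |f x| ≤ 1)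
    (hLip : ∀ x ∈ s, ∀ y ∈ s, |f x - f y| ≤ L * dist x y) : Good α f s (2 + L) where
  cont := (LipschitzOnWith.of_dist_le_mul (K := ⟨L, hL⟩)
    (fun x hx y hy => by rw [Real.dist_eq]; exact hLip x hx y hy)).continuousOn
  bd x hx := by linarith [hb x hx]
  hol x hx y hy := by
    have h3 : 0 ≤ dist x y ^ α := Real.rpow_nonneg dist_nonneg _
    rcases le_total (dist x y) 1 with h | h
    · have h1 : dist x y ≤ dist x y ^ α := by
        rcases (dist_nonneg (x := x) (y := y)).eq_or_lt with h0 | h0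
        · rw [← h0] at h3 ⊢; exact h3
        · simpa using Real.rpow_le_rpow_of_exponent_ge h0 h hα1
      have := hLip x hx y hy
      have := mul_le_mul_of_nonneg_left h1 hL
      nlinarith
    · have h1 : 1 ≤ dist x y ^ α := Real.one_le_rpow h hα0
      have h2 : |f x - f y| ≤ 2 := (abs_sub _ _).trans (by linarith [hb x hx, hb y hy])
      nlinarith

end GoodLemmas

lemma Good.zero_ext {E : Type*} [NormedAddCommGroup E] [NormedSpace ℝ E] {α : ℝ} (hα0 : 0 ≤ α)
    {f : E → ℝ} {R ρ M : ℝ} (hρ : 0 < ρ) (hM : 0 ≤ M)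
    (h : Good α f (Metric.closedBall 0 R ∩ {x | ρ ≤ ‖x‖}) M)
    (h0 : ∀ x : E, ‖x‖ ≤ ρ → f x = 0) : Good α f (Metric.closedBall 0 R) M := by
  have key : ∀ x ∈ Metric.closedBall (0 : E) R, ∀ y : E, ρ ≤ ‖x‖ → ‖y‖ ≤ ρ →
      |f x - f y| ≤ M * dist x y ^ α := by
    intro x hx y hxρ hyρ
    have hx0 : 0 < ‖x‖ := hρ.trans_le hxρ
    have hw : ‖(ρ / ‖x‖) • x‖ = ρ := by
      rw [norm_smul, Real.norm_of_nonneg (by positivity)]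
      field_simp
    have hd : dist x ((ρ / ‖x‖) • x) = ‖x‖ - ρ := by
      have : x - (ρ / ‖x‖) • x = (1 - ρ / ‖x‖) • x := by rw [sub_smul, one_smul]
      rw [dist_eq_norm, this, norm_smul, Real.norm_of_nonneg]
      · field_simp
      · rw [sub_nonneg, div_le_one hx0]; exact hxρ
    have hd2 : dist x ((ρ / ‖x‖) • x) ≤ dist x y := by
      rw [hd, dist_eq_norm]
      linarith [norm_sub_norm_le x y]
    rw [mem_closedBall_zero_iff] at hx
    have := h.hol x ⟨by simpa using hx, hxρ⟩ ((ρ / ‖x‖) • x)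
      ⟨by rw [mem_closedBall_zero_iff, hw]; exact hxρ.trans hx, hw.ge⟩
    rw [h0 _ hw.le] at this
    rw [h0 y hyρ]
    exact this.trans (mul_le_mul_of_nonneg_left (Real.rpow_le_rpow dist_nonneg hd2 hα0) hM)
  refine ⟨?_, ?_, ?_⟩
  · have hc1 : ContinuousOn f (Metric.closedBall (0 : E) ρ) :=
      continuousOn_const.congr (fun x hx => h0 x (by simpa using hx))
    have hcl : IsClosed (Metric.closedBall (0 : E) R ∩ {x | ρ ≤ ‖x‖}) :=
      Metric.isClosed_closedBall.inter (isClosed_le continuous_const continuous_norm)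
    refine (ContinuousOn.union_of_isClosed h.cont hc1 hcl Metric.isClosed_closedBall).mono ?_
    intro x hx
    rcases le_total ρ ‖x‖ with h' | h'
    · exact Or.inl ⟨hx, h'⟩
    · exact Or.inr (by simpa using h')
  · intro x hx
    rcases le_total ρ ‖x‖ with h' | h'
    · exact h.bd x ⟨hx, h'⟩
    · rw [h0 x h']; simpa using hM
  · intro x hx y hy
    rcases le_total ρ ‖x‖ with h' | h' <;> rcases le_total ρ ‖y‖ with h'' | h''
    · exact h.hol x ⟨hx, h'⟩ y ⟨hy, h''⟩
    · exact key x hx y h' h''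
    · rw [abs_sub_comm, dist_comm]; exact key y hy x h'' h'
    · rw [h0 x h', h0 y h'']
      simpa using mul_nonneg hM (Real.rpow_nonneg dist_nonneg _)

lemma norm_kelvinPt (n : ℕ) (Ξ₀ : ℝ) (ξ : EuclideanSpace ℝ (Fin n)) :
    ‖kelvinPt n Ξ₀ ξ‖ = Ξ₀ ^ 2 / ‖ξ‖ := by
  unfold kelvinPt
  rw [norm_smul, Real.norm_of_nonneg (sq_nonneg _)]
  by_cases h : ‖ξ‖ = 0
  · simp [h]
  · field_simp

lemma kelvinPt_kelvinPt (n : ℕ) (Ξ₀ : ℝ) (hΞ : 0 < Ξ₀) (ξ : EuclideanSpace ℝ (Fin n))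
    (h : ξ ≠ 0) : kelvinPt n Ξ₀ (kelvinPt n Ξ₀ ξ) = ξ := by
  have h' : ‖ξ‖ ≠ 0 := by simpa using h
  have h1 := norm_kelvinPt n Ξ₀ ξ
  rw [kelvinPt, h1, kelvinPt, smul_smul]
  have : (Ξ₀ / (Ξ₀ ^ 2 / ‖ξ‖)) ^ 2 * (Ξ₀ / ‖ξ‖) ^ 2 = 1 := by field_simp
  rw [this, one_smul]

lemma dist_kelvinPt (n : ℕ) (Ξ₀ ρ L : ℝ) (hρ : 0 < ρ) (hL : Ξ₀ ^ 2 = L * ρ ^ 2)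
    (hL0 : 0 ≤ L)
    (x y : EuclideanSpace ℝ (Fin n)) (hx : ρ ≤ ‖x‖) (hy : ρ ≤ ‖y‖) :
    dist (kelvinPt n Ξ₀ x) (kelvinPt n Ξ₀ y) ≤ L * dist x y := by
  have hx0 : 0 < ‖x‖ := hρ.trans_le hx
  have hy0 : 0 < ‖y‖ := hρ.trans_le hy
  unfold kelvinPt
  rw [dist_div_norm_sq_smul (norm_pos_iff.1 hx0) (norm_pos_iff.1 hy0)]
  refine mul_le_mul_of_nonneg_right ?_ dist_nonneg
  rw [div_le_iff₀ (by positivity), hL]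
  have : ρ ^ 2 ≤ ‖x‖ * ‖y‖ := by rw [sq]; exact mul_le_mul hx hy hρ.le hx0.le
  exact mul_le_mul_of_nonneg_left this hL0

lemma weight_good (m : ℕ) (Ξ₀ α : ℝ) (hα0 : 0 ≤ α) (hα1 : α ≤ 1) (hΞ : 0 < Ξ₀) (k : ℕ) :
    Good α (fun ξ : EuclideanSpace ℝ (Fin m) => (‖ξ‖ / Ξ₀) ^ k) (cb m Ξ₀) (2 + k / Ξ₀) := by
  have hb : ∀ x ∈ cb m Ξ₀, |‖x‖ / Ξ₀| ≤ 1 := by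
    intro x hx
    rw [cb, mem_closedBall_zero_iff] at hx
    rw [abs_of_nonneg (by positivity), div_le_one hΞ]
    exact hx
  refine Good.of_lip hα0 hα1 (by positivity) ?_ ?_
  · intro x hx
    rw [abs_pow]
    exact pow_le_one₀ (abs_nonneg _) (hb x hx)
  · intro x hx y hy
    have h := abs_pow_sub_pow_le (‖x‖ / Ξ₀) (‖y‖ / Ξ₀) k
    have h1 : max |‖x‖ / Ξ₀| |‖y‖ / Ξ₀| ^ (k - 1) ≤ 1 :=
      pow_le_one₀ (le_max_of_le_left (abs_nonneg _)) (max_le (hb x hx) (hb y hy))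
    have h2 : |‖x‖ / Ξ₀ - ‖y‖ / Ξ₀| ≤ dist x y / Ξ₀ := by
      rw [← sub_div, abs_div, abs_of_pos hΞ, dist_eq_norm]
      gcongr
      exact abs_norm_sub_norm_le _ _
    calc _ ≤ _ := h
      _ ≤ (dist x y / Ξ₀) * k * 1 := by gcongr
      _ = _ := by ring

lemma core (m n : ℕ) (hm : m = 3 ∨ m = 4 ∨ m = 5) (hn : n = 3 ∨ n = 4 ∨ n = 5)
    (α Ξ₀ : ℝ) (hα0 : 0 ≤ α) (hα1 : α ≤ 1) (hΞ₀ : 0 < Ξ₀)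
    (χ : ℝ → ℝ) (hχ1 : ∀ t ≤ (1:ℝ), χ t = 1) (hχ0 : ∀ t : ℝ, 2 ≤ t → χ t = 0)
    (a : ℝ) (ha : 0 < a) (Q₁ Q₂ : ℝ × ℝ → ℝ) (M₁ M₂ : ℝ)
    (h₁ : EuclideanSpace ℝ (Fin m) → ℝ) (h₂ : EuclideanSpace ℝ (Fin n) → ℝ)
    (g1 : Good α (flat m a (cut0 χ (a * Ξ₀) Q₁)) (cb m (2 * Ξ₀)) M₁)
    (g2 : Good α (flat n a (cut0 χ (a * Ξ₀) Q₂)) (cb n (2 * Ξ₀)) M₂)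
    (k1 : Good α h₁ (cb m Ξ₀) M₁) (k2 : Good α h₂ (cb n Ξ₀) M₂)
    (e1 : Set.EqOn h₁ (kelvin m Ξ₀ (flat m a (cutInf χ (a * Ξ₀) Q₁))) (cb m Ξ₀ \ {0}))
    (e2 : Set.EqOn h₂ (kelvin n Ξ₀ (flat n a (cutInf χ (a * Ξ₀) Q₂))) (cb n Ξ₀ \ {0})) :
    Good α (flat n a (cut0 χ (a * Ξ₀) (fun p => Q₁ p * Q₂ p))) (cb n (2 * Ξ₀))
      (2 * (4 + 2 * (2 + (m - 2 : ℕ) / Ξ₀)) * M₁ * M₂) ∧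
    ∃ h : EuclideanSpace ℝ (Fin n) → ℝ,
      Set.EqOn h (kelvin n Ξ₀ (flat n a (cutInf χ (a * Ξ₀) (fun p => Q₁ p * Q₂ p))))
        (cb n Ξ₀ \ {0}) ∧
      Good α h (cb n Ξ₀) (2 * (4 + 2 * (2 + (m - 2 : ℕ) / Ξ₀)) * M₁ * M₂) := by
  set c : ℝ := 2 * (2 + (m - 2 : ℕ) / Ξ₀) with hc
  have hc0 : 0 ≤ c := by positivity
  have hM1 : 0 ≤ M₁ := (abs_nonneg _).trans (g1.bd 0 (by simp [cb, hΞ₀.le]))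
  have hM2 : 0 ≤ M₂ := (abs_nonneg _).trans (g2.bd 0 (by simp [cb, hΞ₀.le]))
  -- the weighted far part
  obtain ⟨W, hW⟩ : ∃ W : EuclideanSpace ℝ (Fin m) → ℝ,
      W = fun ξ => (‖ξ‖ / Ξ₀) ^ (m - 2) * h₁ ξ := ⟨_, rfl⟩
  have gW : Good α W (cb m Ξ₀) (c * M₁) := by
    rw [hW]; exact (weight_good m Ξ₀ α hα0 hα1 hΞ₀ (m - 2)).mul k1
  have eW : ∀ ξ ∈ cb m Ξ₀, ξ ≠ 0 →
      W ξ = flat m a (cutInf χ (a * Ξ₀) Q₁) (kelvinPt m Ξ₀ ξ) := by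
    intro ξ hξ h0
    have h0' : 0 < ‖ξ‖ := norm_pos_iff.2 h0
    rw [hW]
    simp only
    rw [e1 ⟨hξ, h0⟩, kelvin, ← mul_assoc, ← mul_pow]
    have : ‖ξ‖ / Ξ₀ * (Ξ₀ / ‖ξ‖) = 1 := by field_simp
    rw [this, one_pow, one_mul]
  have W0 : W 0 = 0 := by
    rw [hW]
    have : m - 2 ≠ 0 := by omega
    simp [this]
  -- near piece
  have gInf : Good α (flat m a (cutInf χ (a * Ξ₀) Q₁)) (cb m (2 * Ξ₀)) (c * M₁) := by
    refine Good.zero_ext hα0 hΞ₀ (by positivity) ?_ ?_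
    · have hmap : Set.MapsTo (kelvinPt m Ξ₀)
          (Metric.closedBall (0 : EuclideanSpace ℝ (Fin m)) (2 * Ξ₀) ∩ {x | Ξ₀ ≤ ‖x‖})
          (cb m Ξ₀) := by
        intro x hx
        have hx' : Ξ₀ ≤ ‖x‖ := hx.2
        rw [cb, mem_closedBall_zero_iff, norm_kelvinPt, div_le_iff₀ (hΞ₀.trans_le hx')]
        nlinarith
      have := gW.comp hα0 hα1 hmap le_rfl
        (fun x hx y hy => dist_kelvinPt m Ξ₀ Ξ₀ 1 hΞ₀ (by ring) zero_le_one x y hx.2 hy.2)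
      rw [one_mul] at this
      refine this.congr ?_
      intro x hx
      have hx' : 0 < ‖x‖ := hΞ₀.trans_le hx.2
      have hk0 : kelvinPt m Ξ₀ x ≠ 0 := by
        rw [← norm_pos_iff, norm_kelvinPt]; positivity
      simp only
      rw [eW _ (hmap hx) hk0, kelvinPt_kelvinPt m Ξ₀ hΞ₀ x (norm_pos_iff.1 hx')]
    · intro x hx
      rw [flat_cutInf m hm a ha, hχ1 _ ((div_le_one hΞ₀).2 hx)]
      ring
  have gF : Good α (flat m a Q₁) (cb m (2 * Ξ₀)) (M₁ + c * M₁) := by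
    refine (g1.add gInf).congr ?_
    intro x hx
    simp only
    rw [flat_cut0 m hm a ha, flat_cutInf m hm a ha]
    ring
  -- far piece
  have gP : Good α (fun ξ : EuclideanSpace ℝ (Fin m) => if ‖ξ‖ ≤ Ξ₀ / 2 then 0 else
      flat m a (cut0 χ (a * Ξ₀) Q₁) (kelvinPt m Ξ₀ ξ)) (cb m Ξ₀) (4 * M₁) := by
    have hρ : 0 < Ξ₀ / 2 := by positivity
    refine Good.zero_ext hα0 hρ (by positivity) ?_ ?_
    · have hmap : Set.MapsTo (kelvinPt m Ξ₀)
          (Metric.closedBall (0 : EuclideanSpace ℝ (Fin m)) Ξ₀ ∩ {x | Ξ₀ / 2 ≤ ‖x‖})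
          (cb m (2 * Ξ₀)) := by
        intro x hx
        have hx' : Ξ₀ / 2 ≤ ‖x‖ := hx.2
        rw [cb, mem_closedBall_zero_iff, norm_kelvinPt, div_le_iff₀ (hρ.trans_le hx')]
        nlinarith
      have := g1.comp hα0 hα1 hmap (L := 4) (by norm_num)
        (fun x hx y hy => dist_kelvinPt m Ξ₀ (Ξ₀ / 2) 4 hρ (by ring) (by norm_num) x y hx.2 hy.2)
      refine this.congr ?_
      intro x hx
      have hx' : Ξ₀ / 2 ≤ ‖x‖ := hx.2
      simp only
      split_ifs with h
      · have hxe : ‖x‖ = Ξ₀ / 2 := le_antisymm h hx'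
        rw [flat_cut0 m hm a ha, norm_kelvinPt, hxe, hχ0, zero_mul]
        apply le_of_eq
        field_simp
      · rfl
    · intro x hx
      simp [hx]
  have gG := gP.add gW
  have eG : ∀ ξ ∈ cb m Ξ₀, ξ ≠ 0 → (if ‖ξ‖ ≤ Ξ₀ / 2 then 0 else
      flat m a (cut0 χ (a * Ξ₀) Q₁) (kelvinPt m Ξ₀ ξ)) + W ξ = flat m a Q₁ (kelvinPt m Ξ₀ ξ) := by
    intro ξ hξ h0
    have h0' : 0 < ‖ξ‖ := norm_pos_iff.2 h0
    rw [eW ξ hξ h0, flat_cut0 m hm a ha, flat_cutInf m hm a ha]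
    split_ifs with h
    · rw [hχ0]
      · ring
      · rw [norm_kelvinPt, le_div_iff₀ hΞ₀, le_div_iff₀ h0']
        nlinarith
    · ring
  have hTmap : ∀ R, Set.MapsTo (hT n m) (cb n R) (cb m R) := by
    intro R x hx
    rw [cb, mem_closedBall_zero_iff] at hx ⊢
    rw [norm_hT n m hn hm]; exact hx
  have hTl : ∀ x y : EuclideanSpace ℝ (Fin n), dist (hT n m x) (hT n m y) ≤ 1 * dist x y := by
    intro x y; rw [one_mul]; exact dist_hT n m hn hm x y
  have hMM : 0 ≤ M₁ * M₂ := mul_nonneg hM1 hM2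
  constructor
  · have := (gF.comp hα0 hα1 (hTmap _) le_rfl (fun x _ y _ => hTl x y)).mul g2
    refine (this.mono ?_).congr ?_
    · nlinarith
    · intro x hx
      simp only
      rw [flat_hT n m hm, flat_cut0 n hn a ha, flat_cut0 n hn a ha]
      simp only [flat_eq]
      ring
  · refine ⟨_, ?_, ((gG.comp hα0 hα1 (hTmap _) le_rfl (fun x _ y _ => hTl x y)).mul k2).mono ?_⟩
    · intro x hx
      have hTx : hT n m x ≠ 0 := by
        rw [← norm_pos_iff, norm_hT n m hn hm]; exact norm_pos_iff.2 hx.2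
      simp only
      rw [eG _ (hTmap _ hx.1) hTx, hT_kelvinPt n m hn hm, e2 hx, kelvin, kelvin,
        flat_cutInf n hn a ha, flat_cutInf n hn a ha]
      simp only [flat_eq]
      ring
    · nlinarith

/-! Translating the extended norms -/

lemma cNormE_zero (n : ℕ) (f : EuclideanSpace ℝ (Fin n) → ℝ)
    (s : Set (EuclideanSpace ℝ (Fin n))) :
    cNormE n 0 f s = ⨆ x ∈ s, ENNReal.ofReal |f x| := by
  unfold cNormE
  simp only [zero_add, Finset.range_one, Finset.mem_singleton, iSup_iSup_eq_left]
  refine iSup_congr fun x => iSup_congr fun _ => ?_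
  rw [← Real.norm_eq_abs, ← norm_iteratedFDerivWithin_zero (𝕜 := ℝ) (f := f) (s := s) (x := x),
    ofReal_norm]
  rfl

lemma holderSemiE_zero (n : ℕ) (α : ℝ) (f : EuclideanSpace ℝ (Fin n) → ℝ)
    (s : Set (EuclideanSpace ℝ (Fin n))) :
    holderSemiE n 0 α f s = ⨆ x ∈ s, ⨆ y ∈ s, ⨆ (_ : x ≠ y ∧ dist x y ≤ 1),
      ENNReal.ofReal |f x - f y| / ENNReal.ofReal (dist x y ^ α) := by
  unfold holderSemiE
  refine iSup_congr fun x => iSup_congr fun _ => iSup_congr fun y => iSup_congr fun _ =>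
    iSup_congr fun _ => ?_
  congr 1
  rw [iteratedFDerivWithin_zero_eq_comp, Function.comp_apply, Function.comp_apply, ← map_sub,
    ← Real.norm_eq_abs, ← enorm_eq_nnnorm, ← ofReal_norm, LinearIsometryEquiv.norm_map]

lemma cNormE_ne_top (n : ℕ) (f : EuclideanSpace ℝ (Fin n) → ℝ) (R : ℝ)
    (hf : ContinuousOn f (cb n R)) : cNormE n 0 f (cb n R) ≠ ⊤ := by
  obtain ⟨B, hB⟩ := (isCompact_closedBall (0 : EuclideanSpace ℝ (Fin n)) R).exists_bound_of_continuousOn hf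
  rw [cNormE_zero]
  refine ne_top_of_le_ne_top (ENNReal.ofReal_ne_top (r := B)) ?_
  exact iSup₂_le fun x hx => ENNReal.ofReal_le_ofReal (hB x hx)

lemma bd_of_cNormE (n : ℕ) (f : EuclideanSpace ℝ (Fin n) → ℝ) (s : Set (EuclideanSpace ℝ (Fin n)))
    (N : ℝ≥0∞) (hN : N ≠ ⊤) (h : cNormE n 0 f s ≤ N) : ∀ x ∈ s, |f x| ≤ N.toReal := by
  intro x hx
  rw [cNormE_zero] at h
  exact (ENNReal.ofReal_le_iff_le_toReal hN).1 ((le_iSup₂_of_le x hx le_rfl).trans h)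

lemma good_of_c (n : ℕ) (f : EuclideanSpace ℝ (Fin n) → ℝ) (s : Set (EuclideanSpace ℝ (Fin n)))
    (N : ℝ≥0∞) (hN : N ≠ ⊤) (hf : ContinuousOn f s) (h : cNormE n 0 f s ≤ N) :
    Good 0 f s (2 * N.toReal) where
  cont := hf
  bd x hx := by
    have := bd_of_cNormE n f s N hN h x hx
    linarith [abs_nonneg (f x)]
  hol x hx y hy := by
    rw [Real.rpow_zero, mul_one]
    refine (abs_sub _ _).trans ?_
    linarith [bd_of_cNormE n f s N hN h x hx, bd_of_cNormE n f s N hN h y hy]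

lemma good_of_h (n : ℕ) (α : ℝ) (hα : 0 ≤ α) (f : EuclideanSpace ℝ (Fin n) → ℝ)
    (s : Set (EuclideanSpace ℝ (Fin n)))
    (N : ℝ≥0∞) (hN : N ≠ ⊤) (hf : ContinuousOn f s) (h : hNormE n 0 α f s ≤ N) :
    Good α f s (2 * N.toReal) := by
  have hb := bd_of_cNormE n f s N hN (le_self_add.trans h)
  have hh : holderSemiE n 0 α f s ≤ N := le_add_self.trans h
  refine ⟨hf, ?_, ?_⟩
  · intro x hx
    linarith [hb x hx, abs_nonneg (f x)]
  · intro x hx y hy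
    have hN0 : 0 ≤ N.toReal := ENNReal.toReal_nonneg
    have hd0 : 0 ≤ dist x y ^ α := Real.rpow_nonneg dist_nonneg _
    rcases eq_or_ne x y with rfl | hxy
    · simp only [sub_self, abs_zero]; positivity
    rcases le_total (dist x y) 1 with hd | hd
    · have hp : 0 < dist x y ^ α := Real.rpow_pos_of_pos (dist_pos.2 hxy) _
      rw [holderSemiE_zero] at hh
      have h1 : ENNReal.ofReal |f x - f y| / ENNReal.ofReal (dist x y ^ α) ≤ N :=
        le_trans (by
          refine le_iSup₂_of_le x hx (le_iSup₂_of_le y hy ?_)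
          exact le_iSup_of_le (show x ≠ y ∧ dist x y ≤ 1 from ⟨hxy, hd⟩) le_rfl) hh
      rw [← ENNReal.ofReal_div_of_pos hp, ENNReal.ofReal_le_iff_le_toReal hN, div_le_iff₀ hp] at h1
      nlinarith
    · have h1 : 1 ≤ dist x y ^ α := Real.one_le_rpow hd hα
      have h2 : |f x - f y| ≤ 2 * N.toReal :=
        (abs_sub _ _).trans (by linarith [hb x hx, hb y hy])
      nlinarith

lemma c_of_good (n : ℕ) (α : ℝ) (f : EuclideanSpace ℝ (Fin n) → ℝ)
    (s : Set (EuclideanSpace ℝ (Fin n))) (M : ℝ) (h : Good α f s M) :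
    cNormE n 0 f s ≤ ENNReal.ofReal M := by
  rw [cNormE_zero]
  exact iSup₂_le fun x hx => ENNReal.ofReal_le_ofReal (h.bd x hx)

lemma semi_of_good (n : ℕ) (α : ℝ) (f : EuclideanSpace ℝ (Fin n) → ℝ)
    (s : Set (EuclideanSpace ℝ (Fin n))) (M : ℝ) (h : Good α f s M) :
    holderSemiE n 0 α f s ≤ ENNReal.ofReal M := by
  rw [holderSemiE_zero]
  refine iSup₂_le fun x hx => iSup₂_le fun y hy => iSup_le fun hxy => ?_
  have hp : 0 < dist x y ^ α := Real.rpow_pos_of_pos (dist_pos.2 hxy.1) _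
  rw [← ENNReal.ofReal_div_of_pos hp]
  exact ENNReal.ofReal_le_ofReal ((div_le_iff₀ hp).2 (h.hol x hx y hy))

lemma h_of_good (n : ℕ) (α : ℝ) (f : EuclideanSpace ℝ (Fin n) → ℝ)
    (s : Set (EuclideanSpace ℝ (Fin n))) (M : ℝ) (h : Good α f s M) :
    hNormE n 0 α f s ≤ 2 * ENNReal.ofReal M := by
  rw [two_mul]
  exact add_le_add (c_of_good n α f s M h) (semi_of_good n α f s M h)

lemma ext_unique (n : ℕ) (hn : n = 3 ∨ n = 4 ∨ n = 5) (R : ℝ) (hR : 0 < R)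
    (h h' k : EuclideanSpace ℝ (Fin n) → ℝ) (hc : ContinuousOn h (cb n R))
    (hc' : ContinuousOn h' (cb n R)) (e : Set.EqOn h k (cb n R \ {0}))
    (e' : Set.EqOn h' k (cb n R \ {0})) : Set.EqOn h h' (cb n R) := by
  refine Set.EqOn.of_subset_closure (e.trans e'.symm) hc hc' Set.sdiff_subset ?_
  intro x hx
  by_cases hx0 : x = 0
  · subst hx0
    haveI : Nonempty (Fin n) := ⟨⟨0, by omega⟩⟩
    have hd : Dense ({0}ᶜ : Set (EuclideanSpace ℝ (Fin n))) := dense_compl_singleton 0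
    have := hd.open_subset_closure_inter (Metric.isOpen_ball (x := (0 : EuclideanSpace ℝ (Fin n))) (ε := R))
      (Metric.mem_ball_self hR)
    exact closure_mono (Set.inter_subset_inter_left _ Metric.ball_subset_closedBall) this
  · exact subset_closure ⟨hx, hx0⟩

lemma cNormE_congr (n : ℕ) (f g : EuclideanSpace ℝ (Fin n) → ℝ)
    (s : Set (EuclideanSpace ℝ (Fin n))) (h : Set.EqOn f g s) :
    cNormE n 0 f s = cNormE n 0 g s := by
  rw [cNormE_zero, cNormE_zero]
  exact iSup_congr fun x => iSup_congr fun hx => by rw [h hx]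

lemma hNormE_congr (n : ℕ) (α : ℝ) (f g : EuclideanSpace ℝ (Fin n) → ℝ)
    (s : Set (EuclideanSpace ℝ (Fin n))) (h : Set.EqOn f g s) :
    hNormE n 0 α f s = hNormE n 0 α g s := by
  unfold hNormE
  rw [cNormE_congr n f g s h, holderSemiE_zero, holderSemiE_zero]
  congr 1
  exact iSup_congr fun x => iSup_congr fun hx => iSup_congr fun y => iSup_congr fun hy => by
    rw [h hx, h hy]

lemma memC_iff (n : ℕ) (f : EuclideanSpace ℝ (Fin n) → ℝ) (s : Set (EuclideanSpace ℝ (Fin n))) :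
    MemC n 0 f s ↔ ContinuousOn f s := by
  unfold MemC
  exact_mod_cast contDiffOn_zero

lemma memCHolder_iff (n : ℕ) (α : ℝ) (f : EuclideanSpace ℝ (Fin n) → ℝ)
    (s : Set (EuclideanSpace ℝ (Fin n))) :
    MemCHolder n 0 α f s ↔ ContinuousOn f s ∧ holderSemiE n 0 α f s < ⊤ := by
  unfold MemCHolder
  rw [show ((0 : ℕ) : WithTop ℕ∞) = 0 from rfl, contDiffOn_zero]

lemma chunk_good (n : ℕ) (hn : n = 3 ∨ n = 4 ∨ n = 5) (a Ξ₀ : ℝ) (hΞ₀ : 0 < Ξ₀) (χ : ℝ → ℝ)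
    (Q : ℝ × ℝ → ℝ) (hQ : MemChunk n 0 a Ξ₀ χ Q) :
    chunkNormE n 0 a Ξ₀ χ Q ≠ ⊤ ∧
    Good 0 (flat n a (cut0 χ (a * Ξ₀) Q)) (cb n (2 * Ξ₀)) (2 * (chunkNormE n 0 a Ξ₀ χ Q).toReal) ∧
    ∃ h : EuclideanSpace ℝ (Fin n) → ℝ,
      Good 0 h (cb n Ξ₀) (2 * (chunkNormE n 0 a Ξ₀ χ Q).toReal) ∧
      Set.EqOn h (kelvin n Ξ₀ (flat n a (cutInf χ (a * Ξ₀) Q))) (cb n Ξ₀ \ {0}) := by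
  obtain ⟨hQ0, h, hh, he⟩ := hQ
  have hN : chunkNormE n 0 a Ξ₀ χ Q = max (cNormE n 0 (flat n a (cut0 χ (a * Ξ₀) Q)) (cb n (2 * Ξ₀)))
      (cNormE n 0 h (cb n Ξ₀)) := by
    unfold chunkNormE
    congr 1
    refine le_antisymm (iInf₂_le h ⟨hh, he⟩) (le_iInf₂ fun h' hh' => le_of_eq ?_)
    rw [memC_iff] at hh
    exact cNormE_congr _ _ _ _ (ext_unique n hn Ξ₀ hΞ₀ _ _ _ hh ((memC_iff _ _ _).1 hh'.1) he hh'.2)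
  rw [memC_iff] at hQ0 hh
  have hfin : chunkNormE n 0 a Ξ₀ χ Q ≠ ⊤ := by
    rw [hN]
    exact (max_lt (cNormE_ne_top _ _ _ hQ0).lt_top (cNormE_ne_top _ _ _ hh).lt_top).ne
  exact ⟨hfin, good_of_c _ _ _ _ hfin hQ0 (hN ▸ le_max_left _ _), h,
    good_of_c _ _ _ _ hfin hh (hN ▸ le_max_right _ _), he⟩

lemma chunkH_good (n : ℕ) (hn : n = 3 ∨ n = 4 ∨ n = 5) (α : ℝ) (hα : 0 ≤ α)
    (a Ξ₀ : ℝ) (hΞ₀ : 0 < Ξ₀) (χ : ℝ → ℝ)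
    (Q : ℝ × ℝ → ℝ) (hQ : MemChunkH n 0 α a Ξ₀ χ Q) :
    chunkNormHE n 0 α a Ξ₀ χ Q ≠ ⊤ ∧
    Good α (flat n a (cut0 χ (a * Ξ₀) Q)) (cb n (2 * Ξ₀))
      (2 * (chunkNormHE n 0 α a Ξ₀ χ Q).toReal) ∧
    ∃ h : EuclideanSpace ℝ (Fin n) → ℝ,
      Good α h (cb n Ξ₀) (2 * (chunkNormHE n 0 α a Ξ₀ χ Q).toReal) ∧
      Set.EqOn h (kelvin n Ξ₀ (flat n a (cutInf χ (a * Ξ₀) Q))) (cb n Ξ₀ \ {0}) := by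
  obtain ⟨hQ0, h, hh, he⟩ := hQ
  have hN : chunkNormHE n 0 α a Ξ₀ χ Q =
      max (hNormE n 0 α (flat n a (cut0 χ (a * Ξ₀) Q)) (cb n (2 * Ξ₀)))
      (hNormE n 0 α h (cb n Ξ₀)) := by
    unfold chunkNormHE
    congr 1
    refine le_antisymm (iInf₂_le h ⟨hh, he⟩) (le_iInf₂ fun h' hh' => le_of_eq ?_)
    rw [memCHolder_iff] at hh
    exact hNormE_congr _ _ _ _ _
      (ext_unique n hn Ξ₀ hΞ₀ _ _ _ hh.1 ((memCHolder_iff _ _ _ _).1 hh'.1).1 he hh'.2)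
  rw [memCHolder_iff] at hQ0 hh
  have hfin : chunkNormHE n 0 α a Ξ₀ χ Q ≠ ⊤ := by
    rw [hN]
    exact (max_lt (ENNReal.add_lt_top.2 ⟨(cNormE_ne_top _ _ _ hQ0.1).lt_top, hQ0.2⟩)
      (ENNReal.add_lt_top.2 ⟨(cNormE_ne_top _ _ _ hh.1).lt_top, hh.2⟩)).ne
  exact ⟨hfin, good_of_h _ _ hα _ _ _ hfin hQ0.1 (hN ▸ le_max_left _ _), h,
    good_of_h _ _ hα _ _ _ hfin hh.1 (hN ▸ le_max_right _ _), he⟩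

lemma final_arith (c : ℝ) (hc : 0 ≤ c) (N₁ N₂ : ℝ≥0∞) (h1 : N₁ ≠ ⊤) (h2 : N₂ ≠ ⊤) :
    2 * ENNReal.ofReal (c * (2 * N₁.toReal) * (2 * N₂.toReal))
      = ENNReal.ofReal (8 * c) * N₁ * N₂ := by
  conv_rhs => rw [← ENNReal.ofReal_toReal h1, ← ENNReal.ofReal_toReal h2]
  have e : (2 : ℝ≥0∞) = ENNReal.ofReal 2 := by simp
  rw [e, ← ENNReal.ofReal_mul (by norm_num), ← ENNReal.ofReal_mul (by positivity),
    ← ENNReal.ofReal_mul (by positivity)]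
  congr 1
  ring

/-- **Proposition 8 of the paper (product estimate in the weighted spaces).**
For `m, n ∈ {3,4,5}` there is a constant `C` depending only on `m, n, α, Ξ₀, χ` such that
`‖Q₁Q₂; 𝔠⁰_{(n)}‖ ≤ C ‖Q₁; 𝔠⁰_{(m)}‖ ‖Q₂; 𝔠⁰_{(n)}‖`, and similarly for the Hölder
norms. -/
theorem stmt_11 (m n : ℕ) (hm : m = 3 ∨ m = 4 ∨ m = 5) (hn : n = 3 ∨ n = 4 ∨ n = 5)
    (α Ξ₀ : ℝ) (hα : α ∈ Set.Ioo (0:ℝ) 1) (hΞ₀ : 0 < Ξ₀)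
    (χ : ℝ → ℝ) (hχ : ContDiff ℝ (⊤ : ℕ∞) χ) (hχ1 : ∀ t ≤ (1:ℝ), χ t = 1)
    (hχrange : ∀ t : ℝ, 0 ≤ χ t ∧ χ t ≤ 1) (hχ0 : ∀ t : ℝ, 2 ≤ t → χ t = 0) :
    ∃ C : ℝ≥0∞, C ≠ ⊤ ∧ ∀ a : ℝ, 0 < a → ∀ Q₁ Q₂ : ℝ × ℝ → ℝ,
      (∀ ϖ z : ℝ, Q₁ (ϖ, -z) = Q₁ (ϖ, z)) → (∀ ϖ z : ℝ, Q₂ (ϖ, -z) = Q₂ (ϖ, z)) →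
      (MemChunk m 0 a Ξ₀ χ Q₁ → MemChunk n 0 a Ξ₀ χ Q₂ →
        MemChunk n 0 a Ξ₀ χ (fun p => Q₁ p * Q₂ p) ∧
        chunkNormE n 0 a Ξ₀ χ (fun p => Q₁ p * Q₂ p)
          ≤ C * chunkNormE m 0 a Ξ₀ χ Q₁ * chunkNormE n 0 a Ξ₀ χ Q₂) ∧
      (MemChunkH m 0 α a Ξ₀ χ Q₁ → MemChunkH n 0 α a Ξ₀ χ Q₂ →
        MemChunkH n 0 α a Ξ₀ χ (fun p => Q₁ p * Q₂ p) ∧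
        chunkNormHE n 0 α a Ξ₀ χ (fun p => Q₁ p * Q₂ p)
          ≤ C * chunkNormHE m 0 α a Ξ₀ χ Q₁ * chunkNormHE n 0 α a Ξ₀ χ Q₂) := by
  set c : ℝ := 2 * (4 + 2 * (2 + (m - 2 : ℕ) / Ξ₀)) with hc
  have hc0 : 0 ≤ c := by positivity
  refine ⟨ENNReal.ofReal (8 * c), ENNReal.ofReal_ne_top, ?_⟩
  intro a ha Q₁ Q₂ _ _
  constructor
  · intro H1 H2
    obtain ⟨f1, g1, h₁, k1, e1⟩ := chunk_good m hm a Ξ₀ hΞ₀ χ Q₁ H1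
    obtain ⟨f2, g2, h₂, k2, e2⟩ := chunk_good n hn a Ξ₀ hΞ₀ χ Q₂ H2
    obtain ⟨G, h, e, K⟩ := core m n hm hn 0 Ξ₀ le_rfl zero_le_one hΞ₀ χ hχ1 hχ0 a ha Q₁ Q₂ _ _
      h₁ h₂ g1 g2 k1 k2 e1 e2
    have hh : MemC n 0 h (cb n Ξ₀) := (memC_iff _ _ _).2 K.cont
    refine ⟨⟨(memC_iff _ _ _).2 G.cont, h, hh, e⟩, ?_⟩
    rw [← final_arith c hc0 _ _ f1 f2]
    refine max_le ?_ ((iInf₂_le h ⟨hh, e⟩).trans ?_)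
    · exact le_self_add.trans (h_of_good _ _ _ _ _ G)
    · exact le_self_add.trans (h_of_good _ _ _ _ _ K)
  · intro H1 H2
    obtain ⟨f1, g1, h₁, k1, e1⟩ := chunkH_good m hm α hα.1.le a Ξ₀ hΞ₀ χ Q₁ H1
    obtain ⟨f2, g2, h₂, k2, e2⟩ := chunkH_good n hn α hα.1.le a Ξ₀ hΞ₀ χ Q₂ H2
    obtain ⟨G, h, e, K⟩ := core m n hm hn α Ξ₀ hα.1.le hα.2.le hΞ₀ χ hχ1 hχ0 a ha Q₁ Q₂ _ _
      h₁ h₂ g1 g2 k1 k2 e1 e2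
    have hh : MemCHolder n 0 α h (cb n Ξ₀) := (memCHolder_iff _ _ _ _).2
      ⟨K.cont, (semi_of_good _ _ _ _ _ K).trans_lt ENNReal.ofReal_lt_top⟩
    refine ⟨⟨(memCHolder_iff _ _ _ _).2
      ⟨G.cont, (semi_of_good _ _ _ _ _ G).trans_lt ENNReal.ofReal_lt_top⟩, h, hh, e⟩, ?_⟩
    rw [← final_arith c hc0 _ _ f1 f2]
    refine max_le ?_ ((iInf₂_le h ⟨hh, e⟩).trans ?_)
    · exact h_of_good _ _ _ _ _ G
    · exact h_of_good _ _ _ _ _ K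

end
end

section
/- (Monotonicity of the weighted spaces in the dimension parameter.) Let m, n ∈ {3,4,5} with m ≥ n and α ∈ (0,1). If Q ∈ 𝔠⁰_{(m)} then Q ∈ 𝔠⁰_{(n)}, and if Q ∈ 𝔠^{0,α}_{(m)} then Q ∈ 𝔠^{0,α}_{(n)}. -/
open Real Metric ENNReal

noncomputable section

/-- The zero-padding isometric embedding `ℝⁿ → ℝᵐ`. -/
theorem exists_pad (m n : ℕ) (hm : m = 3 ∨ m = 4 ∨ m = 5) (hn : n = 3 ∨ n = 4 ∨ n = 5)
    (hmn : n ≤ m) : ∃ J : EuclideanSpace ℝ (Fin n) →ₗᵢ[ℝ] EuclideanSpace ℝ (Fin m),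
      ∀ (a : ℝ) (Q : ℝ × ℝ → ℝ) (x : EuclideanSpace ℝ (Fin n)),
        flat n a Q x = flat m a Q (J x) := by
  rcases eq_or_lt_of_le hmn with rfl | hlt
  · exact ⟨LinearIsometry.id, fun a Q x => rfl⟩
  have h3 : (n = 3 ∧ m = 4) ∨ (n = 3 ∧ m = 5) ∨ (n = 4 ∧ m = 5) := by omega
  rcases h3 with ⟨rfl, rfl⟩ | ⟨rfl, rfl⟩ | ⟨rfl, rfl⟩
  · refine ⟨⟨⟨⟨fun x => !₂[x 0, x 1, 0, x 2], ?_⟩, ?_⟩, ?_⟩, ?_⟩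
    · intro x y; ext i; fin_cases i <;> simp
    · intro c x; ext i; fin_cases i <;> simp
    · intro x; simp [EuclideanSpace.norm_eq, Fin.sum_univ_succ]
    · intro a Q x; simp [flat, Fin.sum_univ_succ]
  · refine ⟨⟨⟨⟨fun x => !₂[x 0, x 1, 0, 0, x 2], ?_⟩, ?_⟩, ?_⟩, ?_⟩
    · intro x y; ext i; fin_cases i <;> simp
    · intro c x; ext i; fin_cases i <;> simp
    · intro x; simp [EuclideanSpace.norm_eq, Fin.sum_univ_succ]
    · intro a Q x; simp [flat, Fin.sum_univ_succ]
  · refine ⟨⟨⟨⟨fun x => !₂[x 0, x 1, x 2, 0, x 3], ?_⟩, ?_⟩, ?_⟩, ?_⟩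
    · intro x y; ext i; fin_cases i <;> simp
    · intro c x; ext i; fin_cases i <;> simp
    · intro x; simp [EuclideanSpace.norm_eq, Fin.sum_univ_succ]
    · intro a Q x; simp [flat, Fin.sum_univ_succ]

/-- Real-valued reformulation of finiteness of the Hölder seminorm. -/
theorem holderSemiE_lt_top_iff (n : ℕ) (α : ℝ) (f : EuclideanSpace ℝ (Fin n) → ℝ)
    (s : Set (EuclideanSpace ℝ (Fin n))) :
    holderSemiE n 0 α f s < ⊤ ↔ ∃ C : ℝ, 0 ≤ C ∧ ∀ x ∈ s, ∀ y ∈ s, dist x y ≤ 1 →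
      |f x - f y| ≤ C * dist x y ^ α := by
  have key : ∀ x y, (‖iteratedFDerivWithin ℝ 0 f s x - iteratedFDerivWithin ℝ 0 f s y‖₊ : ℝ≥0∞)
      = ENNReal.ofReal |f x - f y| := by
    intro x y
    rw [iteratedFDerivWithin_zero_eq_comp, Function.comp_apply, Function.comp_apply, ← map_sub,
      LinearIsometryEquiv.nnnorm_map, ← Real.norm_eq_abs, ofReal_norm_eq_enorm]
    rfl
  unfold holderSemiE
  simp only [key]
  constructor
  · intro h
    refine ⟨(⨆ x ∈ s, ⨆ y ∈ s, ⨆ (_ : x ≠ y ∧ dist x y ≤ 1),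
      ENNReal.ofReal |f x - f y| / ENNReal.ofReal (dist x y ^ α)).toReal,
      ENNReal.toReal_nonneg, ?_⟩
    intro x hx y hy hxy
    by_cases hne : x = y
    · subst hne
      simp only [sub_self, abs_zero]
      exact mul_nonneg ENNReal.toReal_nonneg (Real.rpow_nonneg dist_nonneg _)
    have hd : 0 < dist x y ^ α := Real.rpow_pos_of_pos (dist_pos.2 hne) _
    have h1 : ENNReal.ofReal |f x - f y| / ENNReal.ofReal (dist x y ^ α) ≤
        ⨆ x ∈ s, ⨆ y ∈ s, ⨆ (_ : x ≠ y ∧ dist x y ≤ 1),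
          ENNReal.ofReal |f x - f y| / ENNReal.ofReal (dist x y ^ α) :=
      le_iSup₂_of_le x hx (le_iSup₂_of_le y hy (le_iSup_of_le ⟨hne, hxy⟩ le_rfl))
    rw [← ENNReal.ofReal_div_of_pos hd] at h1
    have h2 := (ENNReal.ofReal_le_iff_le_toReal h.ne).1 h1
    rwa [div_le_iff₀ hd] at h2
  · rintro ⟨C, hC, h⟩
    refine lt_of_le_of_lt ?_ (ENNReal.ofReal_lt_top (r := C))
    refine iSup₂_le fun x hx => iSup₂_le fun y hy => iSup_le fun hxy => ?_
    have hd : 0 < dist x y ^ α := Real.rpow_pos_of_pos (dist_pos.2 hxy.1) _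
    rw [← ENNReal.ofReal_div_of_pos hd]
    refine ENNReal.ofReal_le_ofReal ?_
    rw [div_le_iff₀ hd]
    exact h x hx y hy hxy.2

/-- The radial factor is Lipschitz on the ball of radius `R`, with values in `[0,1]`. -/
theorem pow_diff_bound (k : ℕ) (s t : ℝ) (hs : 0 ≤ s) (hs1 : s ≤ 1) (ht : 0 ≤ t) (ht1 : t ≤ 1) :
    |s ^ k - t ^ k| ≤ k * |s - t| := by
  induction k with
  | zero => simp
  | succ k ih =>
    have e : s ^ (k + 1) - t ^ (k + 1) = s * (s ^ k - t ^ k) + t ^ k * (s - t) := by ring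
    rw [e]
    refine (abs_add_le _ _).trans ?_
    rw [abs_mul, abs_mul, abs_of_nonneg hs, abs_of_nonneg (pow_nonneg ht k)]
    have h1 : s * |s ^ k - t ^ k| ≤ 1 * (k * |s - t|) :=
      mul_le_mul hs1 ih (abs_nonneg _) zero_le_one
    have h2 : t ^ k * |s - t| ≤ 1 * |s - t| :=
      mul_le_mul_of_nonneg_right (pow_le_one₀ ht ht1) (abs_nonneg _)
    push_cast
    linarith

theorem cont_iff (n : ℕ) (f : EuclideanSpace ℝ (Fin n) → ℝ)
    (s : Set (EuclideanSpace ℝ (Fin n))) :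
    ContDiffOn ℝ ((0 : ℕ) : WithTop ℕ∞) f s ↔ ContinuousOn f s := by
  rw [Nat.cast_zero]; exact contDiffOn_zero

theorem flat_funext {m n : ℕ} (J : EuclideanSpace ℝ (Fin n) →ₗᵢ[ℝ] EuclideanSpace ℝ (Fin m))
    (hJ : ∀ (a : ℝ) (Q : ℝ × ℝ → ℝ) (x : EuclideanSpace ℝ (Fin n)),
        flat n a Q x = flat m a Q (J x)) (a : ℝ) (Q : ℝ × ℝ → ℝ) :
    flat n a Q = fun x => flat m a Q (J x) := funext (hJ a Q)

theorem cb_map {m n : ℕ} (J : EuclideanSpace ℝ (Fin n) →ₗᵢ[ℝ] EuclideanSpace ℝ (Fin m)) (R : ℝ) :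
    Set.MapsTo J (cb n R) (cb m R) := by
  intro x hx
  simpa [cb] using hx

theorem kelvin_pad {m n : ℕ} (hn : 2 ≤ n) (hmn : n ≤ m) (R : ℝ) (hR : 0 < R)
    (J : EuclideanSpace ℝ (Fin n) →ₗᵢ[ℝ] EuclideanSpace ℝ (Fin m))
    (hJ : ∀ (a : ℝ) (Q : ℝ × ℝ → ℝ) (x : EuclideanSpace ℝ (Fin n)),
        flat n a Q x = flat m a Q (J x)) (a : ℝ) (Q : ℝ × ℝ → ℝ)
    (h : EuclideanSpace ℝ (Fin m) → ℝ)
    (hE : Set.EqOn h (kelvin m R (flat m a Q)) (cb m R \ {0})) :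
    Set.EqOn (fun x => (‖x‖ / R) ^ (m - n) * h (J x)) (kelvin n R (flat n a Q))
      (cb n R \ {0}) := by
  intro x hx
  have hx0 : x ≠ 0 := by simpa using hx.2
  have hJx : J x ∈ cb m R \ {0} := by
    refine ⟨cb_map J R hx.1, ?_⟩
    intro h0
    have : ‖J x‖ = 0 := by rw [Set.mem_singleton_iff.1 h0, norm_zero]
    rw [J.norm_map] at this
    exact hx0 (norm_eq_zero.1 this)
  have hp : 0 < ‖x‖ := norm_pos_iff.2 hx0
  simp only [hE hJx, kelvin, kelvinPt, hJ, map_smul, J.norm_map]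
  obtain ⟨k, rfl⟩ := Nat.exists_eq_add_of_le hmn
  obtain ⟨l, rfl⟩ := Nat.exists_eq_add_of_le hn
  have e1 : 2 + l + k - (2 + l) = k := by omega
  have e2 : 2 + l + k - 2 = k + l := by omega
  have e3 : 2 + l - 2 = l := by omega
  rw [e1, e2, e3, ← mul_assoc, pow_add, ← mul_assoc, ← mul_pow]
  have : ‖x‖ / R * (R / ‖x‖) = 1 := by field_simp
  rw [this, one_pow, one_mul]

theorem cont_pad {m n : ℕ} (R : ℝ)
    (J : EuclideanSpace ℝ (Fin n) →ₗᵢ[ℝ] EuclideanSpace ℝ (Fin m)) (k : ℕ)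
    (h : EuclideanSpace ℝ (Fin m) → ℝ) (hc : ContinuousOn h (cb m R)) :
    ContinuousOn (fun x => (‖x‖ / R) ^ k * h (J x)) (cb n R) := by
  refine ContinuousOn.mul (Continuous.continuousOn (by fun_prop)) ?_
  exact hc.comp J.continuous.continuousOn (cb_map J R)

theorem holder_comp {m n : ℕ} (α R : ℝ)
    (J : EuclideanSpace ℝ (Fin n) →ₗᵢ[ℝ] EuclideanSpace ℝ (Fin m))
    (h : EuclideanSpace ℝ (Fin m) → ℝ) (hH : holderSemiE m 0 α h (cb m R) < ⊤) :
    holderSemiE n 0 α (fun x => h (J x)) (cb n R) < ⊤ := by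
  rw [holderSemiE_lt_top_iff] at hH ⊢
  obtain ⟨C, hC, H⟩ := hH
  refine ⟨C, hC, fun x hx y hy hxy => ?_⟩
  have := H (J x) (cb_map J R hx) (J y) (cb_map J R hy) (by rwa [J.dist_map])
  rwa [J.dist_map] at this

theorem holder_pad {m n : ℕ} (α R : ℝ) (hα : α ∈ Set.Ioo (0:ℝ) 1) (hR : 0 < R)
    (J : EuclideanSpace ℝ (Fin n) →ₗᵢ[ℝ] EuclideanSpace ℝ (Fin m)) (k : ℕ)
    (h : EuclideanSpace ℝ (Fin m) → ℝ) (hc : ContinuousOn h (cb m R))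
    (hH : holderSemiE m 0 α h (cb m R) < ⊤) :
    holderSemiE n 0 α (fun x => (‖x‖ / R) ^ k * h (J x)) (cb n R) < ⊤ := by
  rw [holderSemiE_lt_top_iff] at hH ⊢
  obtain ⟨C, hC, H⟩ := hH
  obtain ⟨M, hM⟩ := (isCompact_closedBall (0 : EuclideanSpace ℝ (Fin m)) R).exists_bound_of_continuousOn hc
  have hM0 : 0 ≤ M := (norm_nonneg _).trans (hM 0 (by simp [hR.le]))
  refine ⟨C + k / R * M, by positivity, fun x hx y hy hxy => ?_⟩
  have hx1 : ‖x‖ / R ≤ 1 := by rw [div_le_one hR]; simpa [cb] using hx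
  have hy1 : ‖y‖ / R ≤ 1 := by rw [div_le_one hR]; simpa [cb] using hy
  have hx0 : 0 ≤ ‖x‖ / R := by positivity
  have hy0 : 0 ≤ ‖y‖ / R := by positivity
  have h1 := H (J x) (cb_map J R hx) (J y) (cb_map J R hy) (by rwa [J.dist_map])
  rw [J.dist_map] at h1
  have h2 : |h (J y)| ≤ M := hM _ (cb_map J R hy)
  have hd : dist x y ≤ dist x y ^ α := by
    rcases eq_or_lt_of_le (dist_nonneg (x := x) (y := y)) with h0 | h0
    · rw [← h0]; exact Real.rpow_nonneg le_rfl _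
    · calc dist x y = dist x y ^ (1:ℝ) := (Real.rpow_one _).symm
        _ ≤ _ := Real.rpow_le_rpow_of_exponent_ge h0 hxy hα.2.le
  have h3 : |(‖x‖ / R) ^ k - (‖y‖ / R) ^ k| ≤ k / R * dist x y ^ α := by
    refine (pow_diff_bound k _ _ hx0 hx1 hy0 hy1).trans ?_
    have : |‖x‖ / R - ‖y‖ / R| ≤ dist x y ^ α / R := by
      rw [← sub_div, abs_div, abs_of_pos hR]
      refine div_le_div_of_nonneg_right ?_ hR.le
      exact (abs_norm_sub_norm_le x y).trans ((dist_eq_norm x y).symm.le.trans hd)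
    calc (k:ℝ) * |‖x‖ / R - ‖y‖ / R| ≤ k * (dist x y ^ α / R) :=
          mul_le_mul_of_nonneg_left this (Nat.cast_nonneg k)
      _ = _ := by ring
  have hda : 0 ≤ dist x y ^ α := Real.rpow_nonneg dist_nonneg _
  have e : (‖x‖ / R) ^ k * h (J x) - (‖y‖ / R) ^ k * h (J y)
      = (‖x‖ / R) ^ k * (h (J x) - h (J y)) + ((‖x‖ / R) ^ k - (‖y‖ / R) ^ k) * h (J y) := by ring
  simp only [e]
  refine (abs_add_le _ _).trans ?_
  rw [abs_mul, abs_mul, abs_of_nonneg (pow_nonneg hx0 k)]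
  have h4 : (‖x‖ / R) ^ k * |h (J x) - h (J y)| ≤ 1 * (C * dist x y ^ α) :=
    mul_le_mul (pow_le_one₀ hx0 hx1) h1 (abs_nonneg _) zero_le_one
  have h5 : |(‖x‖ / R) ^ k - (‖y‖ / R) ^ k| * |h (J y)| ≤ k / R * dist x y ^ α * M :=
    mul_le_mul h3 h2 (abs_nonneg _) (by positivity)
  linarith

/-- **Proposition 9 of the paper (monotonicity of the weighted spaces in the dimension
parameter).**  For `m ≥ n` in `{3,4,5}`: `𝔠⁰_{(m)} ⊆ 𝔠⁰_{(n)}` and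
`𝔠^{0,α}_{(m)} ⊆ 𝔠^{0,α}_{(n)}`. -/
theorem stmt_12 (m n : ℕ) (hm : m = 3 ∨ m = 4 ∨ m = 5) (hn : n = 3 ∨ n = 4 ∨ n = 5)
    (hmn : n ≤ m) (α Ξ₀ : ℝ) (hα : α ∈ Set.Ioo (0:ℝ) 1) (hΞ₀ : 0 < Ξ₀)
    (χ : ℝ → ℝ) (hχ : ContDiff ℝ (⊤ : ℕ∞) χ) (hχ1 : ∀ t ≤ (1:ℝ), χ t = 1)
    (hχrange : ∀ t : ℝ, 0 ≤ χ t ∧ χ t ≤ 1) (hχ0 : ∀ t : ℝ, 2 ≤ t → χ t = 0)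
    (a : ℝ) (ha : 0 < a) (Q : ℝ × ℝ → ℝ) (hQeven : ∀ ϖ z : ℝ, Q (ϖ, -z) = Q (ϖ, z)) :
    (MemChunk m 0 a Ξ₀ χ Q → MemChunk n 0 a Ξ₀ χ Q) ∧
    (MemChunkH m 0 α a Ξ₀ χ Q → MemChunkH n 0 α a Ξ₀ χ Q) := by
  obtain ⟨J, hJ⟩ := exists_pad m n hm hn hmn
  have hn2 : 2 ≤ n := by omega
  constructor
  · rintro ⟨h0, h, hh, hE⟩
    rw [MemC, cont_iff] at h0 hh
    refine ⟨?_, fun x => (‖x‖ / Ξ₀) ^ (m - n) * h (J x), ?_,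
      kelvin_pad hn2 hmn Ξ₀ hΞ₀ J hJ a _ h hE⟩
    · rw [MemC, cont_iff, flat_funext J hJ]
      exact h0.comp J.continuous.continuousOn (cb_map J _)
    · rw [MemC, cont_iff]
      exact cont_pad Ξ₀ J _ h hh
  · rintro ⟨⟨h0, h0'⟩, h, ⟨hh, hh'⟩, hE⟩
    rw [cont_iff] at h0 hh
    refine ⟨⟨?_, ?_⟩, fun x => (‖x‖ / Ξ₀) ^ (m - n) * h (J x), ⟨?_, ?_⟩,
      kelvin_pad hn2 hmn Ξ₀ hΞ₀ J hJ a _ h hE⟩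
    · rw [cont_iff, flat_funext J hJ]
      exact h0.comp J.continuous.continuousOn (cb_map J _)
    · rw [flat_funext J hJ]
      exact holder_comp α _ J _ h0'
    · rw [cont_iff]
      exact cont_pad Ξ₀ J _ h hh
    · exact holder_pad α Ξ₀ hα hΞ₀ J _ h hh hh'

end
end
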